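/- arXiv:2402.13156 — 2 statements merged into one kernel-verified Lean document; each statement's English description precedes it below -/
import Mathlib

section
/- In any principal–agent instance, for every pair of cost vectors c, c̃ ∈ C it holds that |OPT(c) − OPT(c̃)| ≤ 2·√(2·d(C)). -/
open Finset

variable {A Ω : Type} [Fintype A] [Fintype Ω] [Nonempty A] [Nonempty Ω]

/-- Agent's expected utility `U^a(p,c,a)` of action `a` under contract `p` and costs `c`. -/
noncomputable def Uag (F : A → Ω → ℝ) (p : Ω → ℝ) (c : A → ℝ) (a : A) : ℝ :=
  (∑ ω, F a ω * p ω) - c a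

/-- Principal's expected utility when the agent plays action `a` under contract `p`. -/
noncomputable def prinAct (F : A → Ω → ℝ) (r p : Ω → ℝ) (a : A) : ℝ :=
  ∑ ω, F a ω * (r ω - p ω)

/-- Principal's expected utility `U^p(p,c)`: the agent plays a best response,
with ties among best responses broken in favor of the principal. -/
noncomputable def Uprin (F : A → Ω → ℝ) (r p : Ω → ℝ) (c : A → ℝ) : ℝ :=
  sSup { x | ∃ a : A, (∀ a' : A, Uag F p c a' ≤ Uag F p c a) ∧ x = prinAct F r p a }

/-- A deterministic contract: nonnegative payments. -/
def IsContract (p : Ω → ℝ) : Prop := ∀ ω, 0 ≤ p ω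

/-- `OPT(c)`: the supremum over contracts of the principal's expected utility against `c`. -/
noncomputable def OPT (F : A → Ω → ℝ) (r : Ω → ℝ) (c : A → ℝ) : ℝ :=
  sSup { x | ∃ p : Ω → ℝ, IsContract p ∧ x = Uprin F r p c }

/-- The regret `R(p)` of a deterministic contract `p`. -/
noncomputable def regret (F : A → Ω → ℝ) (r : Ω → ℝ) (C : Set (A → ℝ)) (p : Ω → ℝ) : ℝ :=
  sSup { x | ∃ c ∈ C, x = OPT F r c - Uprin F r p c }

/-- Uncertainty level `d(C)`: the L∞-diameter of the uncertainty set. -/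
noncomputable def uncLevel (C : Set (A → ℝ)) : ℝ :=
  sSup { x | ∃ c ∈ C, ∃ c' ∈ C, x = ‖c - c'‖ }

/-- The assumptions defining a principal–agent instance `(A, Ω, r, C, F)`. -/
structure IsPAInstance (F : A → Ω → ℝ) (r : Ω → ℝ) (C : Set (A → ℝ)) : Prop where
  r_mem : ∀ ω, r ω ∈ Set.Icc (0:ℝ) 1
  F_mem : ∀ a ω, F a ω ∈ Set.Icc (0:ℝ) 1
  F_sum : ∀ a, ∑ ω, F a ω = 1
  C_nonempty : C.Nonempty
  C_mem : ∀ c ∈ C, ∀ a, c a ∈ Set.Icc (0:ℝ) 1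
  zero_action : ∃ a : A, ∀ c ∈ C, c a = 0

/-!
Move a contract `p` a fraction `η` of the way towards the reward vector `r`. This scales the
principal's utility from each action by `1 - η`, and adds to the agent's utility from each action
`η` times what the principal gained from it under `p`. Hence the agent, even one with costs `c'`
instead of `c`, only switches to an action that is worse for the principal by at most
`2‖c - c'‖ / η`. The total loss `η + 2‖c - c'‖ / η` is balanced at `η = √(2‖c - c'‖)`.
-/

section

variable {A Ω : Type} {C : Set (A → ℝ)} {F : A → Ω → ℝ} {r p q : Ω → ℝ}
  {c c' : A → ℝ} {a b : A} {η x : ℝ}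

theorem IsContract.lineMap (hp : IsContract p) (hq : IsContract q) (hη : η ∈ Set.Icc (0 : ℝ) 1) :
    IsContract (AffineMap.lineMap p q η) :=
  (convex_Ici (0 : Ω → ℝ)).lineMap_mem hp hq hη

theorem norm_sub_le_uncLevel [Fintype A] (hC : Bornology.IsBounded C)
    (hc : c ∈ C) (hc' : c' ∈ C) : ‖c - c'‖ ≤ uncLevel C := by
  obtain ⟨D, hD⟩ := Metric.isBounded_iff.mp hC
  refine le_csSup ⟨D, ?_⟩ ⟨c, hc, c', hc', rfl⟩
  rintro _ ⟨u, hu, v, hv, rfl⟩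
  exact (dist_eq_norm u v).symm.trans_le (hD hu hv)

variable [Fintype Ω]

theorem uag_eq_dotProduct_sub : Uag F p c a = F a ⬝ᵥ p - c a := rfl

theorem prinAct_eq_dotProduct : prinAct F r p a = F a ⬝ᵥ (r - p) := rfl

theorem uag_lineMap :
    Uag F (AffineMap.lineMap p r η) c a = Uag F p c a + η * prinAct F r p a := by
  simp only [uag_eq_dotProduct_sub, prinAct_eq_dotProduct, AffineMap.lineMap_apply_module',
    dotProduct_add, dotProduct_smul, smul_eq_mul]
  ring

theorem prinAct_lineMap :
    prinAct F r (AffineMap.lineMap p r η) a = (1 - η) * prinAct F r p a := by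
  simp only [prinAct_eq_dotProduct, AffineMap.lineMap_apply_module', dotProduct_add,
    dotProduct_sub, dotProduct_smul, smul_eq_mul]
  ring

theorem prinAct_le_one (hF : F a ∈ stdSimplex ℝ Ω) (hr : ∀ ω, r ω ≤ 1) (hp : IsContract p) :
    prinAct F r p a ≤ 1 := by
  calc
    ∑ ω, F a ω * (r ω - p ω) ≤ ∑ ω, F a ω := by
      gcongr with ω
      exact mul_le_of_le_one_right (hF.1 ω) (by linarith [hr ω, hp ω])
    _ = 1 := hF.2

/-- The action `a` maximizes the utility of an agent with costs `c` under the contract `p`, i.e.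
`a ∈ A*(p,c)`. This is the condition over which `Uprin` takes its supremum. -/
def IsBestResponse (F : A → Ω → ℝ) (p : Ω → ℝ) (c : A → ℝ) (a : A) : Prop :=
  ∀ a' : A, Uag F p c a' ≤ Uag F p c a

theorem IsBestResponse.mul_prinAct_le [Fintype A] (ha : IsBestResponse F p c a)
    (hb : IsBestResponse F (AffineMap.lineMap p r η) c' b) :
    η * prinAct F r p a ≤ η * prinAct F r p b + 2 * ‖c - c'‖ := by
  have agent_prefers_a : Uag F p c b ≤ Uag F p c a := ha b
  have agent_prefers_b :
      Uag F p c' a + η * prinAct F r p a ≤ Uag F p c' b + η * prinAct F r p b := by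
    simpa only [uag_lineMap] using hb a
  have cost_change (i : A) : |c i - c' i| ≤ ‖c - c'‖ := norm_le_pi_norm (c - c') i
  simp only [uag_eq_dotProduct_sub] at agent_prefers_a agent_prefers_b
  linarith [(abs_le.mp (cost_change a)).1, (abs_le.mp (cost_change b)).2]

theorem opt_le (h : ∀ p, IsContract p → Uprin F r p c ≤ x) : OPT F r c ≤ x := by
  refine csSup_le ⟨_, 0, fun _ => le_rfl, rfl⟩ ?_
  rintro _ ⟨p, hp, rfl⟩
  exact h p hp

section

variable [Finite A] [Nonempty A]

theorem exists_isBestResponse_uprin_eq (F : A → Ω → ℝ) (r p : Ω → ℝ) (c : A → ℝ) :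
    ∃ a, IsBestResponse F p c a ∧ Uprin F r p c = prinAct F r p a := by
  obtain ⟨a, ha⟩ := Finite.exists_max (Uag F p c)
  have attainable_finite :
      {x | ∃ a, IsBestResponse F p c a ∧ x = prinAct F r p a}.Finite := by
    refine (Set.finite_range (prinAct F r p)).subset ?_
    rintro _ ⟨a, -, rfl⟩
    exact Set.mem_range_self a
  have attainable_nonempty :
      {x | ∃ a, IsBestResponse F p c a ∧ x = prinAct F r p a}.Nonempty := ⟨_, a, ha, rfl⟩
  exact attainable_nonempty.csSup_mem attainable_finite

theorem uprin_le_one (hF : ∀ a, F a ∈ stdSimplex ℝ Ω) (hr : ∀ ω, r ω ≤ 1) (hp : IsContract p) :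
    Uprin F r p c ≤ 1 := by
  obtain ⟨a, -, uprin_eq⟩ := exists_isBestResponse_uprin_eq F r p c
  exact uprin_eq.trans_le (prinAct_le_one (hF a) hr hp)

theorem uprin_zero_nonneg (hF : ∀ a ω, 0 ≤ F a ω) (hr : ∀ ω, 0 ≤ r ω) :
    0 ≤ Uprin F r 0 c := by
  obtain ⟨a, -, uprin_eq⟩ := exists_isBestResponse_uprin_eq F r 0 c
  rw [uprin_eq, prinAct_eq_dotProduct, sub_zero]
  exact dotProduct_nonneg_of_nonneg (hF a) hr

theorem uprin_le_opt (hF : ∀ a, F a ∈ stdSimplex ℝ Ω) (hr : ∀ ω, r ω ≤ 1)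
    (hp : IsContract p) : Uprin F r p c ≤ OPT F r c := by
  refine le_csSup ⟨1, ?_⟩ ⟨p, hp, rfl⟩
  rintro _ ⟨q, hq, rfl⟩
  exact uprin_le_one hF hr hq

theorem opt_mem_Icc (hF : ∀ a, F a ∈ stdSimplex ℝ Ω)
    (hr : ∀ ω, r ω ∈ Set.Icc (0 : ℝ) 1) : OPT F r c ∈ Set.Icc (0 : ℝ) 1 :=
  ⟨(uprin_zero_nonneg (fun a => (hF a).1) fun ω => (hr ω).1).trans
      (uprin_le_opt hF (fun ω => (hr ω).2) fun _ => le_rfl),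
    opt_le fun _ => uprin_le_one hF fun ω => (hr ω).2⟩

end

section

variable [Fintype A] [Nonempty A]

theorem uprin_le_uprin_lineMap_add (hF : ∀ a, F a ∈ stdSimplex ℝ Ω) (hr : ∀ ω, r ω ≤ 1)
    (hp : IsContract p) (hη : 0 < η) (hη_one : η ≤ 1) :
    Uprin F r p c ≤ Uprin F r (AffineMap.lineMap p r η) c' + (η + 2 * ‖c - c'‖ / η) := by
  obtain ⟨a, ha, uprin_eq⟩ := exists_isBestResponse_uprin_eq F r p c
  obtain ⟨b, hb, uprin_lineMap_eq⟩ :=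
    exists_isBestResponse_uprin_eq F r (AffineMap.lineMap p r η) c'
  rw [uprin_eq, uprin_lineMap_eq, prinAct_lineMap]
  set δ := 2 * ‖c - c'‖ / η
  have δ_nonneg : 0 ≤ δ := by positivity
  have switching_loss : prinAct F r p a ≤ prinAct F r p b + δ := by
    refine le_of_mul_le_mul_left ?_ hη
    rw [mul_add, mul_div_cancel₀ _ hη.ne']
    exact ha.mul_prinAct_le hb
  have prinAct_a_le_one : prinAct F r p a ≤ 1 := prinAct_le_one (hF a) hr hp
  calc
    prinAct F r p a = (1 - η) * prinAct F r p a + η * prinAct F r p a := by ring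
    _ ≤ (1 - η) * (prinAct F r p b + δ) + η * 1 := by gcongr
    _ = (1 - η) * prinAct F r p b + (η + δ) - η * δ := by ring
    _ ≤ (1 - η) * prinAct F r p b + (η + δ) := sub_le_self _ (mul_nonneg hη.le δ_nonneg)

theorem opt_le_opt_add (hF : ∀ a, F a ∈ stdSimplex ℝ Ω) (hr : ∀ ω, r ω ∈ Set.Icc (0 : ℝ) 1)
    (hη : 0 < η) : OPT F r c ≤ OPT F r c' + (η + 2 * ‖c - c'‖ / η) := by
  have hr_le (ω : Ω) : r ω ≤ 1 := (hr ω).2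
  rcases le_total η 1 with hη_one | one_le_η
  · refine opt_le fun p hp => ?_
    have lineMap_isContract : IsContract (AffineMap.lineMap p r η) :=
      hp.lineMap (fun ω => (hr ω).1) ⟨hη.le, hη_one⟩
    exact (uprin_le_uprin_lineMap_add hF hr_le hp hη hη_one).trans
      (add_le_add_left (uprin_le_opt hF hr_le lineMap_isContract) _)
  · have δ_nonneg : 0 ≤ 2 * ‖c - c'‖ / η := by positivity
    linarith [(opt_mem_Icc (c := c) hF hr).2, (opt_mem_Icc (c := c') hF hr).1]

theorem opt_sub_opt_le (hF : ∀ a, F a ∈ stdSimplex ℝ Ω) (hr : ∀ ω, r ω ∈ Set.Icc (0 : ℝ) 1) :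
    OPT F r c - OPT F r c' ≤ 2 * √(2 * ‖c - c'‖) := by
  rcases eq_or_ne c c' with rfl | hne
  · simp
  have norm_pos : 0 < ‖c - c'‖ := norm_sub_pos_iff.mpr hne
  have balanced : OPT F r c ≤
      OPT F r c' + (√(2 * ‖c - c'‖) + 2 * ‖c - c'‖ / √(2 * ‖c - c'‖)) :=
    opt_le_opt_add hF hr (by positivity)
  rw [Real.div_sqrt] at balanced
  linarith

end

theorem IsPAInstance.mem_stdSimplex (hInst : IsPAInstance F r C) (a : A) :
    F a ∈ stdSimplex ℝ Ω :=
  ⟨fun ω => (hInst.F_mem a ω).1, hInst.F_sum a⟩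

theorem IsPAInstance.isBounded (hInst : IsPAInstance F r C) : Bornology.IsBounded C :=
  (Bornology.IsBounded.pi fun _ => Metric.isBounded_Icc (0 : ℝ) 1).subset fun c hc a _ =>
    hInst.C_mem c hc a

end

theorem opt_holder_continuity_general
    {A Ω : Type} [Fintype A] [Fintype Ω] [Nonempty A]
    {F : A → Ω → ℝ} {r : Ω → ℝ} (hF : ∀ a, F a ∈ stdSimplex ℝ Ω)
    (hr : ∀ ω, r ω ∈ Set.Icc (0 : ℝ) 1) (c c' : A → ℝ) :
    |OPT F r c - OPT F r c'| ≤ 2 * √(2 * ‖c - c'‖) :=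
  abs_sub_le_iff.mpr ⟨opt_sub_opt_le hF hr, norm_sub_rev c c' ▸ opt_sub_opt_le hF hr⟩

/-- For every pair of cost vectors `c, c̃ ∈ C`,
`|OPT(c) − OPT(c̃)| ≤ 2√(2 d(C))`. -/
theorem opt_holder_continuity
    {A Ω : Type} [Fintype A] [Fintype Ω] [Nonempty A] [Nonempty Ω]
    (F : A → Ω → ℝ) (r : Ω → ℝ) (C : Set (A → ℝ))
    (hInst : IsPAInstance F r C)
    (c ctil : A → ℝ) (hc : c ∈ C) (hctil : ctil ∈ C) :
    |OPT F r c - OPT F r ctil| ≤ 2 * Real.sqrt (2 * uncLevel C) := by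
  have norm_le := norm_sub_le_uncLevel hInst.isBounded hc hctil
  exact (opt_holder_continuity_general hInst.mem_stdSimplex hInst.r_mem c ctil).trans (by gcongr)
end

section
/- In any principal–agent instance with n := |A| actions, there exists a menu Π* of deterministic contracts of size n such that R(Π*) ≤ R(Π) for every menu Π of deterministic contracts of any finite size K ≥ 1; in particular, a regret-minimizing menu of deterministic contracts exists. -/
open Finset

variable {A Ω : Type} [Fintype A] [Fintype Ω] [Nonempty A] [Nonempty Ω]

/-- The agent's best-response utility under contract `p`. -/
noncomputable def agentBest (F : A → Ω → ℝ) (p : Ω → ℝ) (c : A → ℝ) : ℝ :=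
  ⨆ a : A, Uag F p c a

/-- Principal's expected utility `U^p(Π,c)` under a menu of deterministic contracts:
the agent selects an element maximizing its own utility, breaking ties in favor of
the principal. -/
noncomputable def UprinMenu (F : A → Ω → ℝ) (r : Ω → ℝ) {K : ℕ} (m : Fin K → Ω → ℝ)
    (c : A → ℝ) : ℝ :=
  sSup { x | ∃ i : Fin K, (∀ j : Fin K, agentBest F (m j) c ≤ agentBest F (m i) c) ∧
    x = Uprin F r (m i) c }

/-- The regret `R(Π)` of a menu of deterministic contracts. -/
noncomputable def regretMenu (F : A → Ω → ℝ) (r : Ω → ℝ) (C : Set (A → ℝ)) {K : ℕ}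
    (m : Fin K → Ω → ℝ) : ℝ :=
  sSup { x | ∃ c ∈ C, x = OPT F r c - UprinMenu F r m c }

/-!
A menu `m` matters to the agent and to the principal only through its payment profile
`v a = max_i F_a · m_i`: whoever plays `a` picks a contract of the menu paying `a` the most.
Against costs `c` the agent then maximizes `v a - c a` and the principal earns `F_a · r - v a`.
Every profile is already attained by one best contract per action, hence by `|A|` contracts.

As a function of `v` the regret is lower semicontinuous, since the set of maximizers is upper
hemicontinuous and ties favor the principal. Its sublevel sets are bounded above, since a single
large payment forces the agent to be paid a lot whatever action is played. A menu with bounded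
profile can be replaced by one with bounded payments and the same profile, so the minimum is
attained on a compact box of menus.
-/

section TieBreak

variable {ι κ : Type*}

/-- The largest value of `f` at a maximizer of `g`: the payoff when a player maximizing `g` breaks
ties in favor of `f`. `Uprin` and `UprinMenu` are instances of it by definition. -/
noncomputable def tieBreakValue (g f : ι → ℝ) : ℝ :=
  sSup {x | ∃ i, (∀ j, g j ≤ g i) ∧ x = f i}

theorem isGreatest_tieBreakValue [Finite ι] [Nonempty ι] (g f : ι → ℝ) :
    IsGreatest {x | ∃ i, (∀ j, g j ≤ g i) ∧ x = f i} (tieBreakValue g f) := by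
  have values_finite : {x | ∃ i, (∀ j, g j ≤ g i) ∧ x = f i}.Finite :=
    (Set.finite_range f).subset fun _ ⟨i, _, hx⟩ => ⟨i, hx.symm⟩
  obtain ⟨i, hi⟩ := Finite.exists_max g
  exact ⟨Set.Nonempty.csSup_mem ⟨f i, i, hi, rfl⟩ values_finite,
    fun _ hx => le_csSup values_finite.bddAbove hx⟩

theorem exists_tieBreakValue_eq [Finite ι] [Nonempty ι] (g f : ι → ℝ) :
    ∃ i, (∀ j, g j ≤ g i) ∧ tieBreakValue g f = f i :=
  (isGreatest_tieBreakValue g f).1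

theorem le_tieBreakValue [Finite ι] {g f : ι → ℝ} {i : ι} (hi : ∀ j, g j ≤ g i) :
    f i ≤ tieBreakValue g f :=
  have : Nonempty ι := ⟨i⟩
  (isGreatest_tieBreakValue g f).2 ⟨i, hi, rfl⟩

theorem tieBreakValue_iSup_le_comm [Finite ι] [Finite κ] [Nonempty ι] [Nonempty κ]
    (u w : ι → κ → ℝ) :
    tieBreakValue (fun i => ⨆ k, u i k) (fun i => tieBreakValue (u i) (w i)) ≤
      tieBreakValue (fun k => ⨆ i, u i k)
        (fun k => tieBreakValue (fun i => u i k) (fun i => w i k)) := by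
  obtain ⟨i, hi, hval_i⟩ :=
    exists_tieBreakValue_eq (fun i => ⨆ k, u i k) (fun i => tieBreakValue (u i) (w i))
  obtain ⟨k, hk, hval_k⟩ := exists_tieBreakValue_eq (u i) (w i)
  have max_pair (j : ι) (l : κ) : u j l ≤ u i k := calc
    u j l ≤ ⨆ l, u j l := le_ciSup (Finite.bddAbove_range _) l
    _ ≤ ⨆ l, u i l := hi j
    _ ≤ u i k := ciSup_le hk
  have max_k (l : κ) : ⨆ j, u j l ≤ ⨆ j, u j k :=
    (ciSup_le fun j => max_pair j l).trans
      (le_ciSup (f := fun j => u j k) (Finite.bddAbove_range _) i)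
  calc
    _ = w i k := hval_i.trans hval_k
    _ ≤ tieBreakValue (fun j => u j k) (fun j => w j k) :=
      le_tieBreakValue (f := fun j => w j k) fun j => max_pair j k
    _ ≤ _ := le_tieBreakValue (f := fun k => tieBreakValue (fun i => u i k) (fun i => w i k)) max_k

theorem tieBreakValue_iSup_comm [Finite ι] [Finite κ] [Nonempty ι] [Nonempty κ]
    (u w : ι → κ → ℝ) :
    tieBreakValue (fun i => ⨆ k, u i k) (fun i => tieBreakValue (u i) (w i)) =
      tieBreakValue (fun k => ⨆ i, u i k)
        (fun k => tieBreakValue (fun i => u i k) (fun i => w i k)) :=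
  (tieBreakValue_iSup_le_comm u w).antisymm
    (tieBreakValue_iSup_le_comm (fun k i => u i k) (fun k i => w i k))

theorem tieBreakValue_sub_const_const_sub [Finite ι] [Nonempty ι] (x : ι → ℝ) (k y : ℝ) :
    tieBreakValue (fun i => x i - k) (fun i => y - x i) = y - ⨆ i, x i := by
  obtain ⟨i, hi, hval⟩ := exists_tieBreakValue_eq (fun i => x i - k) (fun i => y - x i)
  have iSup_eq : ⨆ i, x i = x i :=
    (ciSup_le fun j => (sub_le_sub_iff_right k).1 (hi j)).antisymm
      (le_ciSup (Finite.bddAbove_range x) i)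
  rw [hval, iSup_eq]

end TieBreak

section ProfileRegret

variable {A : Type*}

/-- The principal's utility against costs `c` when playing `a` yields expected reward `ρ a` and is
paid `v a`. -/
noncomputable def profileUtility (ρ v c : A → ℝ) : ℝ :=
  tieBreakValue (fun a => v a - c a) (fun a => ρ a - v a)

/-- The regret over `C` of the payment profile `v` relative to the benchmark `opt`, which is
`OPT F r` in the application. -/
noncomputable def profileRegret (ρ : A → ℝ) (opt : (A → ℝ) → ℝ) (C : Set (A → ℝ))
    (v : A → ℝ) : ℝ :=
  sSup {x | ∃ c ∈ C, x = opt c - profileUtility ρ v c}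

variable [Finite A] [Nonempty A] {ρ : A → ℝ} {opt : (A → ℝ) → ℝ} {C : Set (A → ℝ)}

theorem sub_profileUtility_le_iff {c v : A → ℝ} {x y : ℝ} :
    x - profileUtility ρ v c ≤ y ↔
      ∃ a, (∀ b, v b - c b ≤ v a - c a) ∧ x - (ρ a - v a) ≤ y := by
  constructor
  · intro h
    obtain ⟨a, ha, hval⟩ := exists_tieBreakValue_eq (fun a => v a - c a) (fun a => ρ a - v a)
    exact ⟨a, ha, hval ▸ h⟩
  · rintro ⟨a, ha, h⟩
    exact (sub_le_sub_left (le_tieBreakValue (f := fun a => ρ a - v a) ha) x).trans h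

theorem bddAbove_setOf_sub_profileUtility (hopt : BddAbove (opt '' C)) (v : A → ℝ) :
    BddAbove {x | ∃ c ∈ C, x = opt c - profileUtility ρ v c} := by
  obtain ⟨y, hy⟩ := hopt
  obtain ⟨z, hz⟩ := Finite.bddAbove_range fun a => v a - ρ a
  refine ⟨y + z, ?_⟩
  rintro _ ⟨c, hc, rfl⟩
  obtain ⟨a, ha⟩ := Finite.exists_max fun a => v a - c a
  refine sub_profileUtility_le_iff.2 ⟨a, ha, ?_⟩
  linarith [hy (Set.mem_image_of_mem opt hc), hz (Set.mem_range_self a)]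

theorem profileRegret_le_iff (hC : C.Nonempty) (hopt : BddAbove (opt '' C)) {v : A → ℝ} {y : ℝ} :
    profileRegret ρ opt C v ≤ y ↔
      ∀ c ∈ C, ∃ a, (∀ b, v b - c b ≤ v a - c a) ∧ opt c - (ρ a - v a) ≤ y := by
  have values_nonempty : {x | ∃ c ∈ C, x = opt c - profileUtility ρ v c}.Nonempty :=
    let ⟨c, hc⟩ := hC; ⟨_, c, hc, rfl⟩
  rw [profileRegret, csSup_le_iff (bddAbove_setOf_sub_profileUtility hopt v) values_nonempty]
  simp only [← sub_profileUtility_le_iff]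
  exact ⟨fun h c hc => h _ ⟨c, hc, rfl⟩, fun h _ ⟨c, hc, hx⟩ => hx ▸ h c hc⟩

theorem lowerSemicontinuous_profileRegret (hC : C.Nonempty) (hopt : BddAbove (opt '' C)) :
    LowerSemicontinuous (profileRegret ρ opt C) := by
  rw [lowerSemicontinuous_iff_isClosed_preimage]
  intro y
  have sublevel_eq : profileRegret ρ opt C ⁻¹' Set.Iic y =
      ⋂ c ∈ C, ⋃ a, (⋂ b, {v | v b - c b ≤ v a - c a}) ∩ {v | opt c - (ρ a - v a) ≤ y} := by
    ext v
    simp only [Set.mem_preimage, Set.mem_Iic, profileRegret_le_iff hC hopt, Set.mem_iInter,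
      Set.mem_iUnion, Set.mem_inter_iff, Set.mem_ofPred_eq]
  rw [sublevel_eq]
  exact isClosed_biInter fun c _ => isClosed_iUnion_of_finite fun a =>
    (isClosed_iInter fun b => isClosed_le (by fun_prop) (by fun_prop)).inter
      (isClosed_le (by fun_prop) (by fun_prop))

theorem bddAbove_setOf_profileRegret_le (hC : C.Nonempty) (hopt : BddAbove (opt '' C)) (y : ℝ) :
    BddAbove {v | profileRegret ρ opt C v ≤ y} := by
  obtain ⟨c, hc⟩ := hC
  obtain ⟨z, hz⟩ := Finite.bddAbove_range fun a => ρ a - c a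
  refine ⟨fun b => y - opt c + z + c b, fun v hv b => ?_⟩
  obtain ⟨a, ha, hle⟩ := (profileRegret_le_iff ⟨c, hc⟩ hopt).1 hv c hc
  linarith [ha b, hz (Set.mem_range_self a)]

end ProfileRegret

section PayProfile

variable {A Ω ι : Type*} {F : A → Ω → ℝ} {M : A → ℝ}

/-- The largest payment per outcome that is relevant to contracts whose expected payments are at
most `M`. Since `x / 0 = 0`, outcomes that no action reaches get the cap `0`. -/
noncomputable def payCap (F : A → Ω → ℝ) (M : A → ℝ) (ω : Ω) : ℝ :=
  ⨆ a, M a / F a ω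

theorem payCap_nonneg (hF : 0 ≤ F) (hM : 0 ≤ M) : 0 ≤ payCap F M :=
  fun ω => Real.iSup_nonneg fun a => div_nonneg (hM a) (hF a ω)

variable [Fintype Ω]

/-- The largest expected payment that some contract of the menu `m` makes for each action. -/
noncomputable def payProfile (F : A → Ω → ℝ) (m : ι → Ω → ℝ) (a : A) : ℝ :=
  ⨆ i, F a ⬝ᵥ m i

theorem dotProduct_le_payProfile [Finite ι] (m : ι → Ω → ℝ) (a : A) (i : ι) :
    F a ⬝ᵥ m i ≤ payProfile F m a :=
  le_ciSup (f := fun i => F a ⬝ᵥ m i) (Finite.bddAbove_range _) i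

theorem continuous_payProfile [Finite ι] [Nonempty ι] :
    Continuous (payProfile F : (ι → Ω → ℝ) → A → ℝ) := by
  have := Fintype.ofFinite ι
  refine continuous_pi fun a => ?_
  simp only [payProfile, ← Finset.sup'_univ_eq_ciSup]
  exact Continuous.finset_sup'_apply _ fun i _ => by fun_prop

theorem exists_payProfile_comp_eq [Finite ι] [Nonempty ι] {κ : Type*} (F : A → Ω → ℝ)
    (m : ι → Ω → ℝ) {f : κ → A} (hf : f.Surjective) :
    ∃ σ : κ → ι, payProfile F (m ∘ σ) = payProfile F m := by
  choose best hbest using fun a => Finite.exists_max fun i => F a ⬝ᵥ m i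
  refine ⟨best ∘ f, funext fun a => ?_⟩
  obtain ⟨k, rfl⟩ := hf a
  have : Nonempty κ := ⟨k⟩
  have bdd : BddAbove (Set.range fun l => F (f k) ⬝ᵥ m (best (f l))) :=
    ⟨_, Set.forall_mem_range.2 fun l => hbest (f k) _⟩
  exact (ciSup_le fun l => dotProduct_le_payProfile m _ _).antisymm
    (ciSup_le fun i => (hbest (f k) i).trans (le_ciSup bdd k))

variable [Finite A] {p : Ω → ℝ}

theorem le_payCap (hF : 0 ≤ F) (hp : 0 ≤ p) (hpM : ∀ a, F a ⬝ᵥ p ≤ M a) {a : A} {ω : Ω}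
    (ha : 0 < F a ω) : p ω ≤ payCap F M ω := by
  have single_le : F a ω * p ω ≤ F a ⬝ᵥ p :=
    Finset.single_le_sum (f := fun ω => F a ω * p ω)
      (fun ω _ => mul_nonneg (hF a ω) (hp ω)) (Finset.mem_univ ω)
  calc
    p ω ≤ M a / F a ω := (le_div_iff₀' ha).2 (single_le.trans (hpM a))
    _ ≤ payCap F M ω := le_ciSup (f := fun a => M a / F a ω) (Finite.bddAbove_range _) a

theorem dotProduct_inf_payCap (hF : 0 ≤ F) (hp : 0 ≤ p) (hpM : ∀ a, F a ⬝ᵥ p ≤ M a) (a : A) :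
    F a ⬝ᵥ (p ⊓ payCap F M) = F a ⬝ᵥ p := by
  refine Finset.sum_congr rfl fun ω _ => ?_
  rcases (hF a ω).eq_or_lt with unreachable | reachable
  · simp only [← unreachable, Pi.zero_apply, zero_mul]
  · rw [Pi.inf_apply, inf_eq_left.2 (le_payCap hF hp hpM reachable)]

theorem exists_mem_Icc_payCap_payProfile_eq [Finite ι] [Nonempty ι] (hF : 0 ≤ F)
    {m : ι → Ω → ℝ} (hm : 0 ≤ m) (hmM : payProfile F m ≤ M) :
    ∃ m' ∈ Set.Icc (0 : ι → Ω → ℝ) (fun _ => payCap F M), payProfile F m' = payProfile F m := by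
  have pay_le (i : ι) (a : A) : F a ⬝ᵥ m i ≤ M a := (dotProduct_le_payProfile m a i).trans (hmM a)
  have M_nonneg : 0 ≤ M := fun a =>
    (dotProduct_nonneg_of_nonneg (hF a) (hm (Classical.arbitrary ι))).trans (pay_le _ a)
  refine ⟨fun i => m i ⊓ payCap F M, ⟨fun i => le_inf (hm i) (payCap_nonneg hF M_nonneg),
    fun i => inf_le_right⟩, ?_⟩
  funext a
  simp only [payProfile, dotProduct_inf_payCap hF (hm _) (pay_le _)]

theorem exists_forall_profileRegret_payProfile_le [Nonempty A] [Finite ι] [Nonempty ι]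
    {ρ : A → ℝ} {opt : (A → ℝ) → ℝ} {C : Set (A → ℝ)}
    (hF : 0 ≤ F) (hC : C.Nonempty) (hopt : BddAbove (opt '' C)) :
    ∃ mstar : ι → Ω → ℝ, 0 ≤ mstar ∧ ∀ m : ι → Ω → ℝ, 0 ≤ m →
      profileRegret ρ opt C (payProfile F mstar) ≤ profileRegret ρ opt C (payProfile F m) := by
  set R : (ι → Ω → ℝ) → ℝ := fun m => profileRegret ρ opt C (payProfile F m)
  obtain ⟨M, hM⟩ := bddAbove_setOf_profileRegret_le (ρ := ρ) hC hopt (R 0)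
  have exists_capped {m : ι → Ω → ℝ} (hm : 0 ≤ m) (hR : R m ≤ R 0) :
      ∃ m' ∈ Set.Icc (0 : ι → Ω → ℝ) (fun _ => payCap F M), R m' = R m := by
    obtain ⟨m', hm', hprofile⟩ := exists_mem_Icc_payCap_payProfile_eq hF hm (hM hR)
    exact ⟨m', hm', congrArg (profileRegret ρ opt C) hprofile⟩
  obtain ⟨zero', hzero', hR_zero'⟩ := exists_capped le_rfl le_rfl
  obtain ⟨mstar, hmstar, hmin⟩ := LowerSemicontinuousOn.exists_isMinOn ⟨zero', hzero'⟩ isCompact_Icc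
    (((lowerSemicontinuous_profileRegret hC hopt).comp
      continuous_payProfile).lowerSemicontinuousOn _)
  refine ⟨mstar, hmstar.1, fun m hm => ?_⟩
  rcases le_total (R m) (R 0) with hR | hR
  · obtain ⟨m', hm', hR_m'⟩ := exists_capped hm hR
    exact (hmin hm').trans_eq hR_m'
  · exact ((hmin hzero').trans_eq hR_zero').trans hR

end PayProfile

section Menu

variable {A Ω : Type} [Fintype Ω] {F : A → Ω → ℝ} {r : Ω → ℝ}

theorem prinAct_eq_dotProduct_sub (F : A → Ω → ℝ) (r p : Ω → ℝ) (a : A) :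
    prinAct F r p a = F a ⬝ᵥ r - F a ⬝ᵥ p :=
  dotProduct_sub (F a) r p

variable [Finite A] [Nonempty A]

theorem UprinMenu_eq_profileUtility {K : ℕ} [NeZero K] (m : Fin K → Ω → ℝ) (c : A → ℝ) :
    UprinMenu F r m c = profileUtility (fun a => F a ⬝ᵥ r) (payProfile F m) c := by
  have agent_eq (a : A) : ⨆ i, Uag F (m i) c a = payProfile F m a - c a :=
    (ciSup_sub (Finite.bddAbove_range fun i => F a ⬝ᵥ m i) (c a)).symm
  have principal_eq (a : A) : tieBreakValue (fun i => Uag F (m i) c a)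
      (fun i => prinAct F r (m i) a) = F a ⬝ᵥ r - payProfile F m a := by
    simp only [prinAct_eq_dotProduct_sub]
    exact tieBreakValue_sub_const_const_sub (fun i => F a ⬝ᵥ m i) (c a) (F a ⬝ᵥ r)
  calc
    UprinMenu F r m c = tieBreakValue (fun i => ⨆ a, Uag F (m i) c a)
        (fun i => tieBreakValue (Uag F (m i) c) (prinAct F r (m i))) := rfl
    _ = tieBreakValue (fun a => ⨆ i, Uag F (m i) c a)
        (fun a => tieBreakValue (fun i => Uag F (m i) c a) (fun i => prinAct F r (m i) a)) :=
      tieBreakValue_iSup_comm _ _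
    _ = profileUtility (fun a => F a ⬝ᵥ r) (payProfile F m) c := by
      simp only [agent_eq, principal_eq, profileUtility]

theorem regretMenu_eq_profileRegret (C : Set (A → ℝ)) {K : ℕ} [NeZero K] (m : Fin K → Ω → ℝ) :
    regretMenu F r C m =
      profileRegret (fun a => F a ⬝ᵥ r) (OPT F r) C (payProfile F m) := by
  simp only [regretMenu, profileRegret, UprinMenu_eq_profileUtility]

theorem Uprin_le_iSup_dotProduct (hF : 0 ≤ F) {p : Ω → ℝ} (hp : IsContract p) (c : A → ℝ) :
    Uprin F r p c ≤ ⨆ a, F a ⬝ᵥ r := by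
  obtain ⟨a, -, hval⟩ := exists_tieBreakValue_eq (Uag F p c) (prinAct F r p)
  calc
    Uprin F r p c = F a ⬝ᵥ r - F a ⬝ᵥ p := hval.trans (prinAct_eq_dotProduct_sub F r p a)
    _ ≤ F a ⬝ᵥ r := sub_le_self _ (dotProduct_nonneg_of_nonneg (hF a) hp)
    _ ≤ ⨆ a, F a ⬝ᵥ r := le_ciSup (f := fun a => F a ⬝ᵥ r) (Finite.bddAbove_range _) a

theorem OPT_le_iSup_dotProduct (hF : 0 ≤ F) (c : A → ℝ) : OPT F r c ≤ ⨆ a, F a ⬝ᵥ r := by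
  refine csSup_le ⟨_, 0, fun _ => le_rfl, rfl⟩ ?_
  rintro _ ⟨p, hp, rfl⟩
  exact Uprin_le_iSup_dotProduct hF hp c

end Menu

theorem exists_regret_minimizing_menu_general {A Ω : Type} [Fintype A] [Fintype Ω] [Nonempty A]
    (F : A → Ω → ℝ) (r : Ω → ℝ) (C : Set (A → ℝ)) (hF : ∀ a ω, 0 ≤ F a ω) (hC : C.Nonempty) :
    ∃ mstar : Fin (Fintype.card A) → Ω → ℝ, (∀ i, IsContract (mstar i)) ∧
      ∀ (K : ℕ), 0 < K → ∀ m : Fin K → Ω → ℝ, (∀ i, IsContract (m i)) →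
        regretMenu F r C mstar ≤ regretMenu F r C m := by
  have OPT_bdd : BddAbove (OPT F r '' C) :=
    ⟨_, Set.forall_mem_image.2 fun c _ => OPT_le_iSup_dotProduct hF c⟩
  obtain ⟨mstar, hmstar, hmin⟩ := exists_forall_profileRegret_payProfile_le
    (ι := Fin (Fintype.card A)) (ρ := fun a => F a ⬝ᵥ r) hF hC OPT_bdd
  refine ⟨mstar, hmstar, fun K hK m hm => ?_⟩
  have : NeZero K := .of_pos hK
  obtain ⟨σ, hσ⟩ := exists_payProfile_comp_eq F m (Fintype.equivFin A).symm.surjective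
  simp only [regretMenu_eq_profileRegret, ← hσ]
  exact hmin (m ∘ σ) fun k => hm (σ k)

/-- There exists a menu of deterministic contracts of size `n = |A|`
whose regret is at most the regret of every menu of deterministic contracts of any
finite size `K ≥ 1`; in particular a regret-minimizing menu exists. -/
theorem exists_regret_minimizing_menu
    {A Ω : Type} [Fintype A] [Fintype Ω] [Nonempty A] [Nonempty Ω]
    (F : A → Ω → ℝ) (r : Ω → ℝ) (C : Set (A → ℝ))
    (hInst : IsPAInstance F r C) :
    ∃ mstar : Fin (Fintype.card A) → Ω → ℝ, (∀ i, IsContract (mstar i)) ∧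
      ∀ (K : ℕ), 0 < K → ∀ m : Fin K → Ω → ℝ, (∀ i, IsContract (m i)) →
        regretMenu F r C mstar ≤ regretMenu F r C m := by
  exact exists_regret_minimizing_menu_general F r C
    (fun a ω => (hInst.F_mem a ω).1) hInst.C_nonempty
end
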